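/- arXiv:2604.13295 — 2 statements merged into one kernel-verified Lean document; each statement's English description precedes it below -/
import Mathlib

section
/- For each n, let Y_n = (y_1, …, y_n) be a tuple of n points in ℝ², let Q_n be the associated t-SNE output distribution on unordered pairs of [n], and let U_n be the uniform distribution on unordered pairs. Let r : ℕ → (0, ∞) satisfy r(n) → 0. If D(U_n‖Q_n)/r(n)⁶ → 0, or if D(Q_n‖U_n)/r(n)⁶ → 0, then for all sufficiently large n there exists an open ball in ℝ² of radius r(n) containing at least (1 − r(n))·n of the points y_1, …, y_n. -/
open Filter Finset
open scoped Classical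

noncomputable section

/-- Normalization constant `Z` of the t-SNE output similarities. -/
def Zsum {N s : ℕ} (y : Fin N → EuclideanSpace ℝ (Fin s)) : ℝ :=
  ∑ i, ∑ j, if i < j then (1 + ‖y i - y j‖ ^ 2)⁻¹ else 0

/-- t-SNE output pair probability `q_{ij}`. -/
def qmat {N s : ℕ} (y : Fin N → EuclideanSpace ℝ (Fin s)) (i j : Fin N) : ℝ :=
  (1 + ‖y i - y j‖ ^ 2)⁻¹ / Zsum y

/-- The uniform probability of a single unordered pair of `[n]`, i.e. `1/C(n,2)`. -/
def unifPair (n : ℕ) : ℝ := 1 / ((n : ℝ) * ((n : ℝ) - 1) / 2)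

/-- `D(U‖Q)` for the t-SNE output distribution `Q` of `y : Fin n → ℝ²`. -/
def KLUnifQ {n : ℕ} (y : Fin n → EuclideanSpace ℝ (Fin 2)) : ℝ :=
  ∑ i, ∑ j, if i < j then unifPair n * Real.log (unifPair n / qmat y i j) else 0

/-- `D(Q‖U)` for the t-SNE output distribution `Q` of `y : Fin n → ℝ²`. -/
def KLQUnif {n : ℕ} (y : Fin n → EuclideanSpace ℝ (Fin 2)) : ℝ :=
  ∑ i, ∑ j, if i < j then qmat y i j * Real.log (qmat y i j / unifPair n) else 0


lemma aux_hell {x ε : ℝ} (hx : 0 < x) (he : 0 < ε) (he1 : ε ≤ 1) (h : ε ≤ |x - 1|) :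
    ε ^ 2 / 9 ≤ (√x - 1) ^ 2 := by
  obtain ⟨s, hs, rfl⟩ : ∃ s : ℝ, 0 < s ∧ x = s ^ 2 :=
    ⟨√x, Real.sqrt_pos.2 hx, (Real.sq_sqrt hx.le).symm⟩
  rw [Real.sqrt_sq hs.le]
  rcases le_abs.1 h with h | h
  · have : ε / 3 ≤ s - 1 := by
      by_contra hc
      push Not at hc
      nlinarith
    nlinarith
  · have : ε / 3 ≤ 1 - s := by
      by_contra hc
      push Not at hc
      nlinarith
    nlinarith

lemma aux_log1 {x : ℝ} (hx : 0 < x) : (√x - 1) ^ 2 ≤ x - 1 - Real.log x := by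
  obtain ⟨s, hs, rfl⟩ : ∃ s : ℝ, 0 < s ∧ x = s ^ 2 :=
    ⟨√x, Real.sqrt_pos.2 hx, (Real.sq_sqrt hx.le).symm⟩
  rw [Real.sqrt_sq hs.le, Real.log_pow]
  have := Real.log_le_sub_one_of_pos hs
  push_cast
  nlinarith

lemma aux_log2 {x : ℝ} (hx : 0 < x) : (√x - 1) ^ 2 ≤ x * Real.log x - x + 1 := by
  obtain ⟨s, hs, rfl⟩ : ∃ s : ℝ, 0 < s ∧ x = s ^ 2 :=
    ⟨√x, Real.sqrt_pos.2 hx, (Real.sq_sqrt hx.le).symm⟩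
  rw [Real.sqrt_sq hs.le, Real.log_pow]
  have h1 := Real.one_sub_inv_le_log_of_pos hs
  have h2 : s ^ 2 * (1 - s⁻¹) ≤ s ^ 2 * Real.log s := by gcongr
  have h3 : s ^ 2 * (1 - s⁻¹) = s ^ 2 - s := by field_simp
  push_cast
  nlinarith

lemma aux_symm {n : ℕ} (f : Fin n → Fin n → ℝ) (hf : ∀ i j, f i j = f j i) :
    ∑ i, ∑ j, (if i ≠ j then f i j else 0) = 2 * ∑ i, ∑ j, (if i < j then f i j else 0) := by
  have h : ∀ i j : Fin n, (if i ≠ j then f i j else 0) =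
      (if i < j then f i j else 0) + (if j < i then f j i else 0) := by
    intro i j
    rcases lt_trichotomy i j with h | h | h
    · simp [h, h.ne, h.not_gt]
    · simp [h]
    · simp [h, h.ne', h.not_gt, hf i j]
  simp_rw [h, Finset.sum_add_distrib]
  rw [Finset.sum_comm (f := fun i j => if j < i then f j i else 0)]
  ring

lemma aux_count (n : ℕ) :
    ∑ i : Fin n, ∑ j : Fin n, (if i < j then (1 : ℝ) else 0) = (n : ℝ) * ((n : ℝ) - 1) / 2 := by
  have h := aux_symm (n := n) (fun _ _ => 1) (fun _ _ => rfl)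
  have h2 : ∑ i : Fin n, ∑ j : Fin n, (if i ≠ j then (1 : ℝ) else 0) = n * ((n : ℝ) - 1) := by
    have : ∀ i j : Fin n, (if i ≠ j then (1 : ℝ) else 0) = 1 - if i = j then 1 else 0 := by
      intro i j; by_cases h : i = j <;> simp [h]
    simp_rw [this, Finset.sum_sub_distrib]
    simp
    ring
  linarith

lemma aux_Zpos {n : ℕ} (hn : 2 ≤ n) (y : Fin n → EuclideanSpace ℝ (Fin 2)) : 0 < Zsum y := by
  unfold Zsum
  have h0 : ∀ i j : Fin n, 0 ≤ if i < j then (1 + ‖y i - y j‖ ^ 2)⁻¹ else 0 := by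
    intro i j; split_ifs <;> positivity
  refine Finset.sum_pos' (fun i _ => Finset.sum_nonneg fun j _ => h0 i j)
    ⟨⟨0, by omega⟩, Finset.mem_univ _, ?_⟩
  refine Finset.sum_pos' (fun j _ => h0 _ j) ⟨⟨1, by omega⟩, Finset.mem_univ _, ?_⟩
  rw [if_pos (by simp [Fin.lt_def])]
  positivity

/-- the likelihood ratio -/
def xr {n : ℕ} (y : Fin n → EuclideanSpace ℝ (Fin 2)) (i j : Fin n) : ℝ :=
  ((n : ℝ) * ((n : ℝ) - 1) / 2) / Zsum y * (1 + ‖y i - y j‖ ^ 2)⁻¹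

lemma aux_P {n : ℕ} (hn : 2 ≤ n) : 0 < (n : ℝ) * ((n : ℝ) - 1) / 2 := by
  have : (2 : ℝ) ≤ n := by exact_mod_cast hn
  have : 0 < (n : ℝ) - 1 := by linarith
  positivity

lemma xr_pos {n : ℕ} (hn : 2 ≤ n) (y : Fin n → EuclideanSpace ℝ (Fin 2)) (i j : Fin n) :
    0 < xr y i j := by
  have := aux_P hn
  have := aux_Zpos hn y
  unfold xr
  positivity

lemma xr_sum {n : ℕ} (hn : 2 ≤ n) (y : Fin n → EuclideanSpace ℝ (Fin 2)) :
    ∑ i, ∑ j, (if i < j then xr y i j else 0) = (n : ℝ) * ((n : ℝ) - 1) / 2 := by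
  have hZ := aux_Zpos hn y
  have : ∀ i j, (if i < j then xr y i j else 0) = ((n : ℝ) * ((n : ℝ) - 1) / 2) / Zsum y *
      (if i < j then (1 + ‖y i - y j‖ ^ 2)⁻¹ else 0) := by
    intro i j; unfold xr; split_ifs <;> simp
  simp_rw [this, ← Finset.mul_sum]
  change _ * Zsum y = _
  field_simp

lemma qmat_eq {n : ℕ} (hn : 2 ≤ n) (y : Fin n → EuclideanSpace ℝ (Fin 2)) (i j : Fin n) :
    qmat y i j = unifPair n * xr y i j := by
  have := aux_P hn
  unfold qmat unifPair xr
  generalize (n : ℝ) * ((n : ℝ) - 1) / 2 = P at *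
  field_simp

lemma unif_pos {n : ℕ} (hn : 2 ≤ n) : 0 < unifPair n := by
  have := aux_P hn
  unfold unifPair; positivity

lemma kl1 {n : ℕ} (hn : 2 ≤ n) (y : Fin n → EuclideanSpace ℝ (Fin 2)) :
    ∑ i, ∑ j, (if i < j then (√(xr y i j) - 1) ^ 2 else 0) ≤
      ((n : ℝ) * ((n : ℝ) - 1) / 2) * KLUnifQ y := by
  have hu := unif_pos hn
  have hP := aux_P hn
  have e : ∀ i j : Fin n, (if i < j then unifPair n * Real.log (unifPair n / qmat y i j) else 0) =
      unifPair n * ((if i < j then xr y i j - 1 - Real.log (xr y i j) else 0)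
        - (if i < j then xr y i j else 0) + (if i < j then 1 else 0)) := by
    intro i j
    have hx := xr_pos hn y i j
    split_ifs
    · rw [qmat_eq hn, show unifPair n / (unifPair n * xr y i j) = (xr y i j)⁻¹ by field_simp,
        Real.log_inv]
      ring
    · simp
  have h : ((n : ℝ) * ((n : ℝ) - 1) / 2) * KLUnifQ y =
      ∑ i, ∑ j, (if i < j then xr y i j - 1 - Real.log (xr y i j) else 0) := by
    unfold KLUnifQ
    simp_rw [e, ← Finset.mul_sum, Finset.sum_add_distrib, Finset.sum_sub_distrib]
    rw [xr_sum hn, aux_count]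
    unfold unifPair
    generalize (n : ℝ) * ((n : ℝ) - 1) / 2 = P at *
    field_simp
    ring
  rw [h]
  refine Finset.sum_le_sum fun i _ => Finset.sum_le_sum fun j _ => ?_
  split_ifs
  · exact aux_log1 (xr_pos hn y i j)
  · exact le_rfl

lemma kl2 {n : ℕ} (hn : 2 ≤ n) (y : Fin n → EuclideanSpace ℝ (Fin 2)) :
    ∑ i, ∑ j, (if i < j then (√(xr y i j) - 1) ^ 2 else 0) ≤
      ((n : ℝ) * ((n : ℝ) - 1) / 2) * KLQUnif y := by
  have hu := unif_pos hn
  have hP := aux_P hn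
  have e : ∀ i j : Fin n, (if i < j then qmat y i j * Real.log (qmat y i j / unifPair n) else 0) =
      unifPair n * ((if i < j then xr y i j * Real.log (xr y i j) - xr y i j + 1 else 0)
        + (if i < j then xr y i j else 0) - (if i < j then 1 else 0)) := by
    intro i j
    have hx := xr_pos hn y i j
    split_ifs
    · rw [qmat_eq hn, show (unifPair n * xr y i j) / unifPair n = (xr y i j) by field_simp]
      ring
    · simp
  have h : ((n : ℝ) * ((n : ℝ) - 1) / 2) * KLQUnif y =
      ∑ i, ∑ j, (if i < j then xr y i j * Real.log (xr y i j) - xr y i j + 1 else 0) := by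
    unfold KLQUnif
    simp_rw [e, ← Finset.mul_sum, Finset.sum_sub_distrib, Finset.sum_add_distrib]
    rw [xr_sum hn, aux_count]
    unfold unifPair
    generalize (n : ℝ) * ((n : ℝ) - 1) / 2 = P at *
    field_simp
    ring
  rw [h]
  refine Finset.sum_le_sum fun i _ => Finset.sum_le_sum fun j _ => ?_
  split_ifs
  · exact aux_log2 (xr_pos hn y i j)
  · exact le_rfl

/-- bad partners of `i` -/
def badN {n : ℕ} (y : Fin n → EuclideanSpace ℝ (Fin 2)) (ε : ℝ) (i : Fin n) : Finset (Fin n) :=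
  Finset.univ.filter (fun j => i ≠ j ∧ ε ≤ |xr y i j - 1|)

lemma bad_sum {n : ℕ} (hn : 2 ≤ n) (y : Fin n → EuclideanSpace ℝ (Fin 2)) {ε D : ℝ}
    (he : 0 < ε) (he1 : ε ≤ 1)
    (hD : ∑ i, ∑ j, (if i < j then (√(xr y i j) - 1) ^ 2 else 0) ≤
      ((n : ℝ) * ((n : ℝ) - 1) / 2) * D) :
    ε ^ 2 / 9 * ∑ i, ((badN y ε i).card : ℝ) ≤ n * ((n : ℝ) - 1) * D := by
  have h1 := aux_symm (fun i j => (√(xr y i j) - 1) ^ 2) (by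
    intro i j; simp only [xr, norm_sub_rev (y i) (y j)])
  have h2 : ε ^ 2 / 9 * ∑ i, ((badN y ε i).card : ℝ) ≤
      ∑ i, ∑ j, (if i ≠ j then (√(xr y i j) - 1) ^ 2 else 0) := by
    rw [Finset.mul_sum]
    refine Finset.sum_le_sum fun i _ => ?_
    rw [badN, Finset.card_filter]
    push_cast
    rw [Finset.mul_sum]
    refine Finset.sum_le_sum fun j _ => ?_
    by_cases hij : i ≠ j
    · by_cases hb : ε ≤ |xr y i j - 1|
      · rw [if_pos ⟨hij, hb⟩, if_pos hij, mul_one]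
        exact aux_hell (xr_pos hn y i j) he he1 hb
      · rw [if_neg (by tauto), if_pos hij, mul_zero]
        positivity
    · rw [if_neg (by tauto), if_neg hij, mul_zero]
  linarith

lemma four_pts (p : Fin 4 → EuclideanSpace ℝ (Fin 2)) (m M : ℝ)
    (h : ∀ i j, i < j → m ≤ ‖p i - p j‖ ^ 2 ∧ ‖p i - p j‖ ^ 2 ≤ M) : m ≤ 6 * (M - m) := by
  have hmM : m ≤ M := (h 0 1 (by decide)).1.trans (h 0 1 (by decide)).2
  by_cases hm : m ≤ 0
  · linarith
  push Not at hm
  let v : Fin 3 → EuclideanSpace ℝ (Fin 2) := ![p 0 - p 1, p 0 - p 2, p 0 - p 3]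
  have hli : ¬ LinearIndependent ℝ v := by
    intro hl
    have := hl.fintype_card_le_finrank
    simp at this
  obtain ⟨g, hg, k, hk⟩ := Fintype.not_linearIndependent_iff.1 hli
  simp only [Fin.sum_univ_three, v, Matrix.cons_val_zero, Matrix.cons_val_one,
    Matrix.cons_val] at hg
  have hz : ‖g 0 • (p 0 - p 1) + g 1 • (p 0 - p 2) + g 2 • (p 0 - p 3)‖ ^ 2 = 0 := by
    rw [hg]; simp
  have hpos : 0 < g 0 ^ 2 + g 1 ^ 2 + g 2 ^ 2 := by
    fin_cases k <;> simp at hk <;> positivity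
  have a1 := h 0 1 (by decide)
  have a2 := h 0 2 (by decide)
  have a3 := h 0 3 (by decide)
  have a12 := h 1 2 (by decide)
  have a13 := h 1 3 (by decide)
  have a23 := h 2 3 (by decide)
  simp only [EuclideanSpace.norm_sq_eq, Fin.sum_univ_two, PiLp.sub_apply, PiLp.add_apply,
    PiLp.smul_apply, smul_eq_mul, Real.norm_eq_abs, sq_abs] at *
  obtain ⟨d1, hd1⟩ : ∃ d, d = (p 0 0 - p 1 0) ^ 2 + (p 0 1 - p 1 1) ^ 2 := ⟨_, rfl⟩
  obtain ⟨d2, hd2⟩ : ∃ d, d = (p 0 0 - p 2 0) ^ 2 + (p 0 1 - p 2 1) ^ 2 := ⟨_, rfl⟩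
  obtain ⟨d3, hd3⟩ : ∃ d, d = (p 0 0 - p 3 0) ^ 2 + (p 0 1 - p 3 1) ^ 2 := ⟨_, rfl⟩
  obtain ⟨d12, hd12⟩ : ∃ d, d = (p 1 0 - p 2 0) ^ 2 + (p 1 1 - p 2 1) ^ 2 := ⟨_, rfl⟩
  obtain ⟨d13, hd13⟩ : ∃ d, d = (p 1 0 - p 3 0) ^ 2 + (p 1 1 - p 3 1) ^ 2 := ⟨_, rfl⟩
  obtain ⟨d23, hd23⟩ : ∃ d, d = (p 2 0 - p 3 0) ^ 2 + (p 2 1 - p 3 1) ^ 2 := ⟨_, rfl⟩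
  have key : g 0 ^ 2 * d1 + g 1 ^ 2 * d2 + g 2 ^ 2 * d3 + g 0 * g 1 * (d1 + d2 - d12)
      + g 0 * g 2 * (d1 + d3 - d13) + g 1 * g 2 * (d2 + d3 - d23) = 0 := by
    rw [← hz, hd1, hd2, hd3, hd12, hd13, hd23]; ring
  rw [← hd1] at a1
  rw [← hd2] at a2
  rw [← hd3] at a3
  rw [← hd12] at a12
  rw [← hd13] at a13
  rw [← hd23] at a23
  clear hd1 hd2 hd3 hd12 hd13 hd23 hz hg hli
  generalize g 0 = x at *
  generalize g 1 = z at *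
  generalize g 2 = w at *
  have cross : ∀ s t a b c : ℝ, (m ≤ a ∧ a ≤ M) → (m ≤ b ∧ b ≤ M) → (m ≤ c ∧ c ≤ M) →
      s * t * m - (M - m) * (s ^ 2 + t ^ 2) ≤ s * t * (a + b - c) := by
    intro s t a b c ha hb hc
    have hE : |a + b - c - m| ≤ 2 * (M - m) := by
      rw [abs_le]; constructor <;> linarith [ha.1, ha.2, hb.1, hb.2, hc.1, hc.2]
    have h1 : |s * t| * |a + b - c - m| ≤ |s * t| * (2 * (M - m)) := by gcongr
    have h2 : 2 * |s * t| ≤ s ^ 2 + t ^ 2 := by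
      rw [abs_mul]; nlinarith [sq_nonneg (|s| - |t|), sq_abs s, sq_abs t]
    have h3 := neg_abs_le (s * t * (a + b - c - m))
    rw [abs_mul] at h3
    nlinarith
  have c1 := cross x z d1 d2 d12 a1 a2 a12
  have c2 := cross x w d1 d3 d13 a1 a3 a13
  have c3 := cross z w d2 d3 d23 a2 a3 a23
  have e1 : x ^ 2 * m ≤ x ^ 2 * d1 := by have := a1.1; gcongr
  have e2 : z ^ 2 * m ≤ z ^ 2 * d2 := by have := a2.1; gcongr
  have e3 : w ^ 2 * m ≤ w ^ 2 * d3 := by have := a3.1; gcongr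
  have e4 : 0 ≤ m * (x + z + w) ^ 2 := by positivity
  have fin : (x ^ 2 + z ^ 2 + w ^ 2) * m ≤ (x ^ 2 + z ^ 2 + w ^ 2) * (6 * (M - m)) := by
    nlinarith [mul_nonneg (sub_nonneg.2 hmM) hpos.le]
  exact le_of_mul_le_mul_left fin hpos

lemma good_bounds {n : ℕ} (y : Fin n → EuclideanSpace ℝ (Fin 2)) {ε : ℝ} {i j : Fin n}
    (he : 0 < ε) (he1 : ε ≤ 1 / 100) (hij : i ≠ j) (h : j ∉ badN y ε i) :
    ((n : ℝ) * ((n : ℝ) - 1) / 2) / Zsum y / (1 + ε) - 1 ≤ ‖y i - y j‖ ^ 2 ∧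
    ‖y i - y j‖ ^ 2 ≤ ((n : ℝ) * ((n : ℝ) - 1) / 2) / Zsum y / (1 - ε) - 1 := by
  simp only [badN, Finset.mem_filter, Finset.mem_univ, true_and, not_and, not_le] at h
  have h := abs_lt.1 (h hij)
  unfold xr at h
  generalize ((n : ℝ) * ((n : ℝ) - 1) / 2) / Zsum y = A at *
  have hd : 0 < 1 + ‖y i - y j‖ ^ 2 := by positivity
  have h1 : 1 - ε < A / (1 + ‖y i - y j‖ ^ 2) := by rw [div_eq_mul_inv]; linarith
  have h2 : A / (1 + ‖y i - y j‖ ^ 2) < 1 + ε := by rw [div_eq_mul_inv]; linarith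
  rw [lt_div_iff₀ hd] at h1
  rw [div_lt_iff₀ hd] at h2
  constructor
  · rw [sub_le_iff_le_add, div_le_iff₀ (by linarith)]; nlinarith
  · rw [le_sub_iff_add_le, le_div_iff₀ (by linarith)]; nlinarith

set_option maxHeartbeats 2000000 in
lemma main_fin {n : ℕ} (hn : 8 ≤ n) (y : Fin n → EuclideanSpace ℝ (Fin 2)) {r D : ℝ}
    (hr : 0 < r) (hr1 : r ≤ 1) (hDr : D ≤ r ^ 6 / 10000000)
    (hD : ∑ i, ∑ j, (if i < j then (√(xr y i j) - 1) ^ 2 else 0) ≤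
      ((n : ℝ) * ((n : ℝ) - 1) / 2) * D) :
    ∃ c : EuclideanSpace ℝ (Fin 2), (1 - r) * n ≤
        (Finset.univ.filter (fun i : Fin n => y i ∈ Metric.ball c r)).card := by
  have hnR : (8 : ℝ) ≤ n := by exact_mod_cast hn
  obtain ⟨ε, hε⟩ : ∃ ε, ε = r ^ 2 / 100 := ⟨_, rfl⟩
  have he : 0 < ε := by rw [hε]; positivity
  have he1 : ε ≤ 1 / 100 := by rw [hε]; nlinarith
  have hs := bad_sum (by omega) y he (by linarith) hD
  have hs2 : ∑ i, ((badN y ε i).card : ℝ) ≤ r * n ^ 2 / 64 := by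
    have h1 : n * ((n : ℝ) - 1) * D ≤ n ^ 2 * (r ^ 6 / 10000000) := by
      have : n * ((n : ℝ) - 1) * D ≤ n * ((n : ℝ) - 1) * (r ^ 6 / 10000000) := by
        have : 0 ≤ (n : ℝ) - 1 := by linarith
        gcongr
      have h6 : 0 < r ^ 6 / 10000000 := by positivity
      nlinarith
    have h2 : r ^ 4 * ∑ i, ((badN y ε i).card : ℝ) ≤ r ^ 4 * (r ^ 2 * n ^ 2 * (9 / 1000)) := by
      rw [hε] at hs ⊢
      nlinarith
    have h3 := le_of_mul_le_mul_left h2 (by positivity)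
    have h4 : r ^ 2 ≤ r := by nlinarith
    have h5 : r ^ 2 * (n : ℝ) ^ 2 ≤ r * n ^ 2 := by gcongr
    have h6 : 0 ≤ r * (n : ℝ) ^ 2 := by positivity
    linarith
  let Hc : Finset (Fin n) := Finset.univ.filter (fun i => r * n / 8 < ((badN y ε i).card : ℝ))
  have hHc : (Hc.card : ℝ) ≤ n / 8 := by
    have h1 : (Hc.card : ℝ) * (r * n / 8) ≤ ∑ i, ((badN y ε i).card : ℝ) := by
      calc (Hc.card : ℝ) * (r * n / 8) = ∑ i ∈ Hc, (r * n / 8) := by simp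
        _ ≤ ∑ i ∈ Hc, ((badN y ε i).card : ℝ) := by
            refine Finset.sum_le_sum fun i hi => ?_
            exact (Finset.mem_filter.1 hi).2.le
        _ ≤ _ := Finset.sum_le_sum_of_subset_of_nonneg (Finset.subset_univ _)
            (fun _ _ _ => by positivity)
    have h2 : (r * n / 8) * (Hc.card : ℝ) ≤ (r * n / 8) * (n / 8) := by nlinarith
    exact le_of_mul_le_mul_left h2 (by positivity)
  have hN : ∀ i, i ∉ Hc → ((insert i (badN y ε i)).card : ℝ) ≤ n / 8 + 1 := by
    intro i hi
    have h1 : ((badN y ε i).card : ℝ) ≤ r * n / 8 := by simpa [Hc] using hi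
    have h2 : ((insert i (badN y ε i)).card : ℝ) ≤ (badN y ε i).card + 1 := by
      exact_mod_cast Finset.card_insert_le _ _
    nlinarith
  have pick : ∀ F : Finset (Fin n), (F.card : ℝ) < n → ∃ i, i ∉ F := by
    intro F hF
    by_contra hc
    push Not at hc
    rw [Finset.eq_univ_iff_forall.2 hc] at hF
    simp at hF
  have un : ∀ F G : Finset (Fin n), ((F ∪ G).card : ℝ) ≤ F.card + G.card := by
    intro F G; exact_mod_cast Finset.card_union_le _ _
  obtain ⟨a, ha⟩ := pick Hc (by linarith)
  have u1 := un Hc (insert a (badN y ε a))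
  have na := hN a ha
  obtain ⟨b, hb⟩ := pick (Hc ∪ insert a (badN y ε a)) (by linarith)
  have u2 := un (Hc ∪ insert a (badN y ε a)) (insert b (badN y ε b))
  have nb := hN b (by simp at hb; tauto)
  obtain ⟨c, hc⟩ := pick (Hc ∪ insert a (badN y ε a) ∪ insert b (badN y ε b)) (by linarith)
  have u3 := un (Hc ∪ insert a (badN y ε a) ∪ insert b (badN y ε b)) (insert c (badN y ε c))
  have nc := hN c (by simp at hc; tauto)
  obtain ⟨d, hd⟩ := pick (Hc ∪ insert a (badN y ε a) ∪ insert b (badN y ε b) ∪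
    insert c (badN y ε c)) (by linarith)
  simp only [Finset.mem_union, Finset.mem_insert, not_or] at hb hc hd
  have h4 := four_pts ![y a, y b, y c, y d]
    (((n : ℝ) * ((n : ℝ) - 1) / 2) / Zsum y / (1 + ε) - 1)
    (((n : ℝ) * ((n : ℝ) - 1) / 2) / Zsum y / (1 - ε) - 1) (by
      have gab := good_bounds y (i := a) (j := b) he he1 (Ne.symm hb.2.1) hb.2.2
      have gac := good_bounds y (i := a) (j := c) he he1 (Ne.symm hc.1.2.1) hc.1.2.2
      have gad := good_bounds y (i := a) (j := d) he he1 (Ne.symm hd.1.1.2.1) hd.1.1.2.2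
      have gbc := good_bounds y (i := b) (j := c) he he1 (Ne.symm hc.2.1) hc.2.2
      have gbd := good_bounds y (i := b) (j := d) he he1 (Ne.symm hd.1.2.1) hd.1.2.2
      have gcd := good_bounds y (i := c) (j := d) he he1 (Ne.symm hd.2.1) hd.2.2
      intro i j hij
      fin_cases i <;> fin_cases j <;> first | exact absurd hij (by decide) | assumption)
  have hA : ((n : ℝ) * ((n : ℝ) - 1) / 2) / Zsum y / (1 - ε) - 1 < r ^ 2 := by
    have hA0 : 0 < ((n : ℝ) * ((n : ℝ) - 1) / 2) / Zsum y :=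
      div_pos (aux_P (by omega)) (aux_Zpos (by omega) y)
    generalize ((n : ℝ) * ((n : ℝ) - 1) / 2) / Zsum y = A at *
    rw [show r ^ 2 = 100 * ε by linarith]
    have p1 : 0 < 1 - ε := by linarith
    have p2 : 0 < 1 + ε := by linarith
    obtain ⟨B, hB⟩ : ∃ B, B = A / (1 - ε) := ⟨_, rfl⟩
    obtain ⟨C, hC⟩ : ∃ C, C = A / (1 + ε) := ⟨_, rfl⟩
    rw [← hB, ← hC] at h4
    rw [← hB]
    have hB' : B * (1 - ε) = A := by rw [hB]; field_simp
    have hC' : C * (1 + ε) = A := by rw [hC]; field_simp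
    have hBp : 0 < B := by rw [hB]; positivity
    have hCp : 0 < C := by rw [hC]; positivity
    -- B - C = ε (B + C), C ≤ B
    have hCB : C ≤ B := by nlinarith
    have hdiff : B - C = ε * (B + C) := by linarith
    have hdiff2 : B - C ≤ 2 * ε * B := by nlinarith
    have hB2 : B ≤ 6 / 5 := by nlinarith
    nlinarith
  refine ⟨y a, ?_⟩
  have hsub : (badN y ε a)ᶜ ⊆ Finset.univ.filter (fun i : Fin n => y i ∈ Metric.ball (y a) r) := by
    intro j hj
    rw [Finset.mem_compl] at hj
    rw [Finset.mem_filter]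
    refine ⟨Finset.mem_univ _, ?_⟩
    by_cases haj : a = j
    · subst haj; exact Metric.mem_ball_self hr
    · have := (good_bounds y he he1 haj hj).2
      rw [Metric.mem_ball, dist_comm, dist_eq_norm]
      exact lt_of_pow_lt_pow_left₀ 2 hr.le (by linarith)
  have h1 : ((badN y ε a).card : ℝ) ≤ r * n / 8 := by simpa [Hc] using ha
  have h2 : (((badN y ε a)ᶜ).card : ℝ) + (badN y ε a).card = n := by
    have := Finset.card_compl_add_card (badN y ε a)
    rw [Fintype.card_fin] at this
    exact_mod_cast this
  have h3 : (((badN y ε a)ᶜ).card : ℝ) ≤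
      (Finset.univ.filter (fun i : Fin n => y i ∈ Metric.ball (y a) r)).card := by
    exact_mod_cast Finset.card_le_card hsub
  have h5 : 0 ≤ r * n := by positivity
  linarith

/-- if `r(n) → 0` and `D(U_n‖Q_n)/r(n)⁶ → 0` or `D(Q_n‖U_n)/r(n)⁶ → 0`, then
for all sufficiently large `n` there is an open ball of radius `r(n)` in `ℝ²` containing at
least `(1 - r(n))·n` of the points `y_1, …, y_n`. -/
theorem stmt10 (y : (n : ℕ) → Fin n → EuclideanSpace ℝ (Fin 2))
    (r : ℕ → ℝ) (hr : ∀ n, 0 < r n) (hr0 : Tendsto r atTop (nhds 0))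
    (hKL : Tendsto (fun n => KLUnifQ (y n) / r n ^ 6) atTop (nhds 0) ∨
      Tendsto (fun n => KLQUnif (y n) / r n ^ 6) atTop (nhds 0)) :
    ∀ᶠ n in atTop, ∃ c : EuclideanSpace ℝ (Fin 2),
      (1 - r n) * n ≤
        (Finset.univ.filter (fun i : Fin n => y n i ∈ Metric.ball c (r n))).card := by
  have small : ∀ᶠ n in atTop, r n ≤ 1 := hr0.eventually_le_const (by norm_num)
  rcases hKL with h | h
  · filter_upwards [small, eventually_ge_atTop 8,
      h.eventually_lt_const (show (0 : ℝ) < 1 / 10000000 by norm_num)] with n h1 h2 h3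
    rw [div_lt_iff₀ (by have := hr n; positivity)] at h3
    exact main_fin h2 (y n) (hr n) h1 (by linarith) (kl1 (by omega) (y n))
  · filter_upwards [small, eventually_ge_atTop 8,
      h.eventually_lt_const (show (0 : ℝ) < 1 / 10000000 by norm_num)] with n h1 h2 h3
    rw [div_lt_iff₀ (by have := hr n; positivity)] at h3
    exact main_fin h2 (y n) (hr n) h1 (by linarith) (kl2 (by omega) (y n))

end
end

section
/- Fix σ > 0 and δ ∈ (0, 1/2). There exist constants c > 0, c' > 0, C > 0 such that the following holds for all sufficiently large d. Set n = ⌈e^{c·d^{2δ}}⌉ and let x_1, …, x_n be independent uniform random points on the unit sphere S^{d−1} ⊂ ℝ^d; form the t-SNE pair probabilities p_{ij} using all bandwidths equal to σ. Then with probability at least 1 − e^{−c'·d^{2δ}}, every unordered pair {i,j} satisfies |C(n,2)·p_{ij} − 1| ≤ C·d^{−1/2+δ}. -/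
open MeasureTheory Filter Finset

noncomputable section

/-- The uniform (normalized surface) probability measure on the unit sphere in `ℝ^d`. -/
def sphereUniform (d : ℕ) : Measure (Metric.sphere (0 : EuclideanSpace ℝ (Fin d)) 1) :=
  ((volume : Measure (EuclideanSpace ℝ (Fin d))).toSphere Set.univ)⁻¹ •
    (volume : Measure (EuclideanSpace ℝ (Fin d))).toSphere

/-- t-SNE conditional probability `p_{j|i}`. -/
def pcond {N d : ℕ} (x : Fin N → EuclideanSpace ℝ (Fin d)) (σ : Fin N → ℝ) (i j : Fin N) : ℝ :=
  Real.exp (-‖x i - x j‖ ^ 2 / (2 * σ i ^ 2)) /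
    ∑ k ∈ Finset.univ.erase i, Real.exp (-‖x i - x k‖ ^ 2 / (2 * σ i ^ 2))

/-- t-SNE pair probability `p_{ij} = (p_{i|j} + p_{j|i})/N`. -/
def pmat {N d : ℕ} (x : Fin N → EuclideanSpace ℝ (Fin d)) (σ : Fin N → ℝ) (i j : Fin N) : ℝ :=
  (pcond x σ j i + pcond x σ i j) / N

lemma sphereUniform_isProb (d : ℕ) (hd : 0 < d) : IsProbabilityMeasure (sphereUniform d) := by
  constructor
  have : Nonempty (Fin d) := ⟨⟨0, hd⟩⟩
  unfold sphereUniform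
  rw [Measure.smul_apply, smul_eq_mul]
  apply ENNReal.inv_mul_cancel
  · rw [Ne, Measure.measure_univ_eq_zero]
    exact Measure.toSphere_ne_zero _
  · exact measure_ne_top _ _

open scoped Pointwise in
lemma sphere_cap (d : ℕ) (hd : 0 < d) (v : EuclideanSpace ℝ (Fin d)) (hv : ‖v‖ = 1)
    (t : ℝ) (ht2 : t ^ 2 ≤ 1 / 2) (ht0 : 0 ≤ t) :
    sphereUniform d {u | t ≤ inner ℝ (u : EuclideanSpace ℝ (Fin d)) v} ≤
      ENNReal.ofReal (Real.exp (-(d * t ^ 2 / 2))) := by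
  have : Nonempty (Fin d) := ⟨⟨0, hd⟩⟩
  have hms : MeasurableSet {u : Metric.sphere (0 : EuclideanSpace ℝ (Fin d)) 1 |
      t ≤ inner ℝ (u : EuclideanSpace ℝ (Fin d)) v} := by
    apply IsClosed.measurableSet
    exact isClosed_le continuous_const (by fun_prop)
  unfold sphereUniform
  rw [Measure.smul_apply, smul_eq_mul, Measure.toSphere_apply' _ hms, Measure.toSphere_apply_univ]
  set B := (volume : Measure (EuclideanSpace ℝ (Fin d))) (Metric.ball 0 1) with hB
  have hB0 : B ≠ 0 := (Metric.measure_ball_pos _ _ one_pos).ne'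
  have hBt : B ≠ ⊤ := measure_ball_lt_top.ne
  have hsub : (Set.Ioo (0 : ℝ) 1 • (Subtype.val '' {u : Metric.sphere (0 : EuclideanSpace ℝ (Fin d)) 1 |
      t ≤ inner ℝ (u : EuclideanSpace ℝ (Fin d)) v}) : Set (EuclideanSpace ℝ (Fin d))) ⊆
      Metric.closedBall (t • v) (Real.sqrt (1 - t ^ 2)) := by
    rintro _ ⟨r, ⟨hr0, hr1⟩, _, ⟨u, hu, rfl⟩, rfl⟩
    have hun : ‖(u : EuclideanSpace ℝ (Fin d))‖ = 1 := by simp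
    simp only [Set.mem_ofPred_eq] at hu
    rw [Metric.mem_closedBall, dist_eq_norm]
    apply Real.le_sqrt_of_sq_le
    simp only [smul_eq_mul]
    rw [@norm_sub_sq_real, norm_smul, norm_smul, hun, hv, inner_smul_left, inner_smul_right]
    simp only [Real.norm_eq_abs, mul_one, sq_abs, conj_trivial]
    have h1 : r * (t * t) ≤ r * (t * inner ℝ (u : EuclideanSpace ℝ (Fin d)) v) := by gcongr
    nlinarith
  have hvol : volume (Set.Ioo (0 : ℝ) 1 •
      (Subtype.val '' {u : Metric.sphere (0 : EuclideanSpace ℝ (Fin d)) 1 |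
      t ≤ inner ℝ (u : EuclideanSpace ℝ (Fin d)) v}) : Set (EuclideanSpace ℝ (Fin d))) ≤
      ENNReal.ofReal (Real.exp (-(d * t ^ 2 / 2))) * B := by
    refine (measure_mono hsub).trans ?_
    rw [Measure.addHaar_closedBall _ _ (Real.sqrt_nonneg _), finrank_euclideanSpace_fin]
    gcongr
    have h2 : Real.sqrt (1 - t ^ 2) ≤ Real.exp (-(t ^ 2 / 2)) := by
      apply Real.sqrt_le_iff.2 ⟨(Real.exp_pos _).le, ?_⟩
      rw [← Real.exp_nat_mul]
      have := Real.add_one_le_exp (-(t ^ 2))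
      have h3 : ((2 : ℕ) : ℝ) * (-(t ^ 2 / 2)) = -(t ^ 2) := by push_cast; ring
      rw [h3]
      linarith
    calc Real.sqrt (1 - t ^ 2) ^ d ≤ Real.exp (-(t ^ 2 / 2)) ^ d := by gcongr
      _ = _ := by rw [← Real.exp_nat_mul]; congr 1; ring
  rw [finrank_euclideanSpace_fin]
  have hd0 : (d : ENNReal) ≠ 0 := by exact_mod_cast hd.ne'
  have hdt : (d : ENNReal) ≠ ⊤ := ENNReal.natCast_ne_top _
  have hm0 : (d : ENNReal) * B ≠ 0 := mul_ne_zero hd0 hB0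
  have hmt : (d : ENNReal) * B ≠ ⊤ := ENNReal.mul_ne_top hdt hBt
  calc _ ≤ ((d : ENNReal) * B)⁻¹ *
        ((d : ENNReal) * (ENNReal.ofReal (Real.exp (-(d * t ^ 2 / 2))) * B)) := by gcongr
    _ = (((d : ENNReal) * B)⁻¹ * ((d : ENNReal) * B)) *
        ENNReal.ofReal (Real.exp (-(d * t ^ 2 / 2))) := by ring
    _ = _ := by rw [ENNReal.inv_mul_cancel hm0 hmt, one_mul]

lemma sphere_band (d : ℕ) (hd : 0 < d) (v : EuclideanSpace ℝ (Fin d)) (hv : ‖v‖ = 1)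
    (t : ℝ) (ht2 : t ^ 2 ≤ 1 / 2) (ht0 : 0 ≤ t) :
    sphereUniform d {u | t < |inner ℝ (u : EuclideanSpace ℝ (Fin d)) v|} ≤
      2 * ENNReal.ofReal (Real.exp (-(d * t ^ 2 / 2))) := by
  have h1 := sphere_cap d hd v hv t ht2 ht0
  have h2 := sphere_cap d hd (-v) (by simpa using hv) t ht2 ht0
  calc _ ≤ sphereUniform d ({u | t ≤ inner ℝ (u : EuclideanSpace ℝ (Fin d)) v} ∪
        {u | t ≤ inner ℝ (u : EuclideanSpace ℝ (Fin d)) (-v)}) := by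
        apply measure_mono
        intro u hu
        simp only [Set.mem_ofPred_eq, Set.mem_union, inner_neg_right] at hu ⊢
        rcases lt_abs.1 hu with h | h
        · exact Or.inl h.le
        · exact Or.inr h.le
    _ ≤ _ := measure_union_le _ _
    _ ≤ _ := add_le_add h1 h2
    _ = _ := by rw [two_mul]

lemma pair_band (d n : ℕ) (hd : 0 < d) (t : ℝ) (ht2 : t ^ 2 ≤ 1 / 2) (ht0 : 0 ≤ t)
    (i j : Fin n) (hij : i ≠ j) :
    Measure.pi (fun _ : Fin n => sphereUniform d)
      {x | t < |inner ℝ (x i : EuclideanSpace ℝ (Fin d)) (x j : EuclideanSpace ℝ (Fin d))|} ≤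
      2 * ENNReal.ofReal (Real.exp (-(d * t ^ 2 / 2))) := by
  have hP := sphereUniform_isProb d hd
  have hind := ProbabilityTheory.iIndepFun_pi (μ := fun _ : Fin n => sphereUniform d)
    (X := fun _ u => u) (fun _ => aemeasurable_id)
  have h2 := hind.indepFun hij
  have h3 := (ProbabilityTheory.indepFun_iff_map_prod_eq_prod_map_map
    (measurable_pi_apply i).aemeasurable (measurable_pi_apply j).aemeasurable).1 h2
  have ei := (measurePreserving_eval (fun _ : Fin n => sphereUniform d) i).map_eq
  have ej := (measurePreserving_eval (fun _ : Fin n => sphereUniform d) j).map_eq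
  change Measure.map (fun x : Fin n → Metric.sphere (0 : EuclideanSpace ℝ (Fin d)) 1 => x i) _ = _
    at ei
  change Measure.map (fun x : Fin n → Metric.sphere (0 : EuclideanSpace ℝ (Fin d)) 1 => x j) _ = _
    at ej
  rw [ei, ej] at h3
  set S : Set (Metric.sphere (0 : EuclideanSpace ℝ (Fin d)) 1 ×
      Metric.sphere (0 : EuclideanSpace ℝ (Fin d)) 1) :=
    {p | t < |inner ℝ (p.1 : EuclideanSpace ℝ (Fin d)) (p.2 : EuclideanSpace ℝ (Fin d))|} with hS
  have hSm : MeasurableSet S := by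
    apply IsOpen.measurableSet
    exact isOpen_lt continuous_const (by fun_prop)
  have h4 : Measure.pi (fun _ : Fin n => sphereUniform d)
      {x | t < |inner ℝ (x i : EuclideanSpace ℝ (Fin d)) (x j : EuclideanSpace ℝ (Fin d))|} =
      ((sphereUniform d).prod (sphereUniform d)) S := by
    rw [← h3, Measure.map_apply (by fun_prop) hSm]
    rfl
  rw [h4, Measure.prod_apply_symm hSm]
  calc _ ≤ ∫⁻ _, 2 * ENNReal.ofReal (Real.exp (-(d * t ^ 2 / 2))) ∂(sphereUniform d) := by
        apply lintegral_mono
        intro v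
        exact sphere_band d hd v (by simp) t ht2 ht0
    _ = _ := by simp

lemma pcond_bounds {n d : ℕ} (x : Fin n → EuclideanSpace ℝ (Fin d)) (hx : ∀ i, ‖x i‖ = 1)
    (σ : ℝ) (hσ : 0 < σ) (t : ℝ)
    (h : ∀ i j, i ≠ j → |inner ℝ (x i) (x j)| ≤ t) (i j : Fin n) (hij : i ≠ j) :
    Real.exp (-(2 * t / σ ^ 2)) ≤ ((n : ℝ) - 1) * pcond x (fun _ => σ) i j ∧
    ((n : ℝ) - 1) * pcond x (fun _ => σ) i j ≤ Real.exp (2 * t / σ ^ 2) := by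
  have key : ∀ k, i ≠ k → Real.exp (-(1 + t) / σ ^ 2) ≤
      Real.exp (-‖x i - x k‖ ^ 2 / (2 * σ ^ 2)) ∧
      Real.exp (-‖x i - x k‖ ^ 2 / (2 * σ ^ 2)) ≤ Real.exp (-(1 - t) / σ ^ 2) := by
    intro k hk
    have e : -‖x i - x k‖ ^ 2 / (2 * σ ^ 2) = -(1 - inner ℝ (x i) (x k)) / σ ^ 2 := by
      rw [@norm_sub_sq_real, hx, hx]
      field_simp
      ring
    have := abs_le.1 (h i k hk)
    rw [e]
    constructor <;> (gcongr; linarith)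
  have hn : 2 ≤ n := by
    by_contra hc
    apply hij
    apply Fin.ext
    omega
  have hn1 : (0 : ℝ) < (n : ℝ) - 1 := by
    have : (2 : ℝ) ≤ n := by exact_mod_cast hn
    linarith
  have hcard : ((Finset.univ.erase i).card : ℝ) = (n : ℝ) - 1 := by
    rw [Finset.card_erase_of_mem (Finset.mem_univ _), Finset.card_univ, Fintype.card_fin]
    push_cast [show 1 ≤ n by omega]
    ring
  have hlo : ((n : ℝ) - 1) * Real.exp (-(1 + t) / σ ^ 2) ≤
      ∑ k ∈ Finset.univ.erase i, Real.exp (-‖x i - x k‖ ^ 2 / (2 * σ ^ 2)) := by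
    rw [← hcard, ← nsmul_eq_mul]
    exact Finset.card_nsmul_le_sum _ _ _ fun k hk => (key k (Finset.ne_of_mem_erase hk).symm).1
  have hhi : ∑ k ∈ Finset.univ.erase i, Real.exp (-‖x i - x k‖ ^ 2 / (2 * σ ^ 2)) ≤
      ((n : ℝ) - 1) * Real.exp (-(1 - t) / σ ^ 2) := by
    rw [← hcard, ← nsmul_eq_mul]
    exact Finset.sum_le_card_nsmul _ _ _ fun k hk => (key k (Finset.ne_of_mem_erase hk).symm).2
  have hpos : 0 < ∑ k ∈ Finset.univ.erase i, Real.exp (-‖x i - x k‖ ^ 2 / (2 * σ ^ 2)) :=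
    lt_of_lt_of_le (by positivity) hlo
  obtain ⟨k1, k2⟩ := key j hij
  unfold pcond
  rw [← mul_div_assoc, le_div_iff₀ hpos, div_le_iff₀ hpos]
  constructor
  · calc _ ≤ Real.exp (-(2 * t / σ ^ 2)) * (((n : ℝ) - 1) * Real.exp (-(1 - t) / σ ^ 2)) := by
          gcongr
      _ = ((n : ℝ) - 1) * (Real.exp (-(2 * t / σ ^ 2)) * Real.exp (-(1 - t) / σ ^ 2)) := by ring
      _ = ((n : ℝ) - 1) * Real.exp (-(1 + t) / σ ^ 2) := by
          rw [← Real.exp_add]; congr 2; field_simp; ring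
      _ ≤ _ := by gcongr
  · calc _ ≤ ((n : ℝ) - 1) * Real.exp (-(1 - t) / σ ^ 2) := by gcongr
      _ = ((n : ℝ) - 1) * (Real.exp (2 * t / σ ^ 2) * Real.exp (-(1 + t) / σ ^ 2)) := by
          rw [← Real.exp_add]; congr 2; field_simp; ring
      _ = Real.exp (2 * t / σ ^ 2) * (((n : ℝ) - 1) * Real.exp (-(1 + t) / σ ^ 2)) := by ring
      _ ≤ _ := by gcongr

lemma pmat_bound {n d : ℕ} (x : Fin n → EuclideanSpace ℝ (Fin d)) (hx : ∀ i, ‖x i‖ = 1)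
    (σ : ℝ) (hσ : 0 < σ) (t : ℝ) (ht0 : 0 ≤ t) (ht1 : t ≤ 1)
    (h : ∀ i j, i ≠ j → |inner ℝ (x i) (x j)| ≤ t) (i j : Fin n) (hij : i ≠ j) :
    |((n : ℝ) * ((n : ℝ) - 1) / 2) * pmat x (fun _ => σ) i j - 1| ≤
      (2 / σ ^ 2 * Real.exp (2 / σ ^ 2)) * t := by
  obtain ⟨a1, a2⟩ := pcond_bounds x hx σ hσ t h i j hij
  obtain ⟨b1, b2⟩ := pcond_bounds x hx σ hσ t h j i hij.symm
  have hn : (n : ℝ) ≠ 0 := by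
    have := i.pos
    positivity
  have e : ((n : ℝ) * ((n : ℝ) - 1) / 2) * pmat x (fun _ => σ) i j =
      (((n : ℝ) - 1) * pcond x (fun _ => σ) i j + ((n : ℝ) - 1) * pcond x (fun _ => σ) j i) / 2 := by
    unfold pmat
    field_simp
    ring
  rw [e]
  set s := 2 * t / σ ^ 2 with hs
  have hs0 : 0 ≤ s := by positivity
  have hsE : s ≤ 2 / σ ^ 2 := by rw [hs]; gcongr; linarith
  have c1 := Real.add_one_le_exp (-s)
  have c2 : Real.exp s - 1 ≤ s * Real.exp s := by
    have : Real.exp (-s) * Real.exp s = 1 := by rw [← Real.exp_add]; simp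
    nlinarith [Real.exp_pos s]
  have c3 : s * Real.exp s ≤ s * Real.exp (2 / σ ^ 2) := by gcongr
  have c4 : s ≤ s * Real.exp (2 / σ ^ 2) :=
    le_mul_of_one_le_right hs0 (Real.one_le_exp (by positivity))
  have e2 : (2 / σ ^ 2 * Real.exp (2 / σ ^ 2)) * t = s * Real.exp (2 / σ ^ 2) := by
    rw [hs]; ring
  rw [e2, abs_le]
  constructor <;> linarith

/-- fix `σ > 0` and `δ ∈ (0, 1/2)`. There are constants `c, c', C > 0` such
that for all sufficiently large `d`, taking `n = ⌈e^{c·d^{2δ}}⌉` i.i.d. uniform points on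
`S^{d-1}` and forming the t-SNE pair probabilities with all bandwidths `σ`, with probability
at least `1 - e^{-c'·d^{2δ}}` every pair `{i,j}` satisfies
`|C(n,2)·p_{ij} - 1| ≤ C·d^{-1/2+δ}`. -/
theorem stmt11 (σ : ℝ) (hσ : 0 < σ) (δ : ℝ) (hδ : 0 < δ) (hδ' : δ < 1 / 2) :
    ∃ c : ℝ, 0 < c ∧ ∃ c' : ℝ, 0 < c' ∧ ∃ C : ℝ, 0 < C ∧
      ∀ᶠ d : ℕ in atTop, ∀ n : ℕ, n = ⌈Real.exp (c * (d : ℝ) ^ (2 * δ))⌉₊ →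
        ENNReal.ofReal (1 - Real.exp (-(c' * (d : ℝ) ^ (2 * δ)))) ≤
          Measure.pi (fun _ : Fin n => sphereUniform d)
            {x : Fin n → Metric.sphere (0 : EuclideanSpace ℝ (Fin d)) 1 |
              ∀ i j : Fin n, i ≠ j →
                |((n : ℝ) * ((n : ℝ) - 1) / 2) *
                    pmat (fun k => (x k : EuclideanSpace ℝ (Fin d))) (fun _ => σ) i j - 1| ≤
                  C * (d : ℝ) ^ (-(1 / 2 : ℝ) + δ)} := by
  refine ⟨1 / 16, by norm_num, 1 / 16, by norm_num, 2 / σ ^ 2 * Real.exp (2 / σ ^ 2),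
    by positivity, ?_⟩
  have hT : Tendsto (fun d : ℕ => (d : ℝ) ^ (2 * δ)) atTop atTop :=
    (tendsto_rpow_atTop (by linarith)).comp tendsto_natCast_atTop_atTop
  have hZ : Tendsto (fun d : ℕ => (d : ℝ) ^ (-(1 / 2 : ℝ) + δ)) atTop (nhds 0) := by
    have h := (tendsto_rpow_neg_atTop (y := 1 / 2 - δ) (by linarith)).comp
      (tendsto_natCast_atTop_atTop (R := ℝ))
    refine h.congr fun d => ?_
    simp only [Function.comp]
    congr 1
    ring
  filter_upwards [hT.eventually_ge_atTop 16, hZ.eventually_le_const (show (0 : ℝ) < 1 / 2 by norm_num),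
    eventually_gt_atTop 0] with d hd1 hd2 hd n hn
  set t := (d : ℝ) ^ (-(1 / 2 : ℝ) + δ) with ht
  set T := (d : ℝ) ^ (2 * δ) with hTd
  have hdR : (0 : ℝ) < d := by exact_mod_cast hd
  have ht0 : 0 ≤ t := by positivity
  have ht2 : t ^ 2 ≤ 1 / 2 := by nlinarith
  have hdt : d * t ^ 2 = T := by
    rw [ht, hTd, ← Real.rpow_natCast, ← Real.rpow_mul hdR.le]
    nth_rewrite 1 [← Real.rpow_one (d : ℝ)]
    rw [← Real.rpow_add hdR]
    congr 1
    push_cast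
    ring
  have hP := sphereUniform_isProb d hd
  set μ := Measure.pi (fun _ : Fin n => sphereUniform d) with hμ
  set Bad : Fin n → Fin n → Set (Fin n → Metric.sphere (0 : EuclideanSpace ℝ (Fin d)) 1) :=
    fun i j => {x | i ≠ j ∧
      t < |inner ℝ (x i : EuclideanSpace ℝ (Fin d)) (x j : EuclideanSpace ℝ (Fin d))|} with hBad
  have hBm : ∀ i j, MeasurableSet (Bad i j) := by
    intro i j
    have h1 : MeasurableSet {x : Fin n → Metric.sphere (0 : EuclideanSpace ℝ (Fin d)) 1 |
        t < |inner ℝ (x i : EuclideanSpace ℝ (Fin d)) (x j : EuclideanSpace ℝ (Fin d))|} := by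
      apply IsOpen.measurableSet
      exact isOpen_lt continuous_const (by fun_prop)
    exact MeasurableSet.inter (MeasurableSet.const (i ≠ j)) h1
  have hBle : ∀ i j, μ (Bad i j) ≤ 2 * ENNReal.ofReal (Real.exp (-(T / 2))) := by
    intro i j
    by_cases hij : i = j
    · simp [hBad, hij]
    · rw [← hdt]
      refine (measure_mono ?_).trans (pair_band d n hd t ht2 ht0 i j hij)
      intro x hx
      exact hx.2
  have hU : μ (⋃ i, ⋃ j, Bad i j) ≤ ENNReal.ofReal (Real.exp (-(1 / 16 * T))) := by
    calc μ (⋃ i, ⋃ j, Bad i j) ≤ ∑ i, μ (⋃ j, Bad i j) := measure_iUnion_fintype_le _ _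
      _ ≤ ∑ i : Fin n, ∑ j : Fin n, μ (Bad i j) :=
          Finset.sum_le_sum fun i _ => measure_iUnion_fintype_le _ _
      _ ≤ ∑ i : Fin n, ∑ j : Fin n, 2 * ENNReal.ofReal (Real.exp (-(T / 2))) :=
          Finset.sum_le_sum fun i _ => Finset.sum_le_sum fun j _ => hBle i j
      _ = ENNReal.ofReal ((n : ℝ) * (n * (2 * Real.exp (-(T / 2))))) := by
          rw [ENNReal.ofReal_mul (by positivity), ENNReal.ofReal_mul (by positivity),
            ENNReal.ofReal_mul (by positivity)]
          simp
      _ ≤ _ := by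
          apply ENNReal.ofReal_le_ofReal
          have hn2 : (n : ℝ) ≤ 2 * Real.exp (1 / 16 * T) := by
            have h1 := Nat.ceil_lt_add_one (Real.exp_pos (1 / 16 * T)).le
            rw [← hn] at h1
            have h2 : (1 : ℝ) ≤ Real.exp (1 / 16 * T) := Real.one_le_exp (by linarith)
            linarith
          have h8 : (8 : ℝ) ≤ Real.exp (5 / 16 * T) := by
            have h5 : (6 : ℝ) ≤ Real.exp 5 := by
              have := Real.add_one_le_exp (5 : ℝ); linarith
            have h1 : (2 : ℝ) ≤ Real.exp 1 := by
              have := Real.add_one_le_exp (1 : ℝ); linarith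
            have h3 : Real.exp 5 = Real.exp 1 ^ 5 := by
              rw [← Real.exp_nat_mul]; norm_num
            have h4 : (2 : ℝ) ^ 5 ≤ Real.exp 1 ^ 5 := by gcongr
            have h6 : Real.exp 5 ≤ Real.exp (5 / 16 * T) := Real.exp_le_exp.2 (by linarith)
            linarith
          calc (n : ℝ) * (n * (2 * Real.exp (-(T / 2)))) ≤
              (2 * Real.exp (1 / 16 * T)) * ((2 * Real.exp (1 / 16 * T)) *
                (2 * Real.exp (-(T / 2)))) := by gcongr
            _ = 8 * (Real.exp (1 / 16 * T) * Real.exp (1 / 16 * T) * Real.exp (-(T / 2))) := by ring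
            _ ≤ Real.exp (5 / 16 * T) *
                (Real.exp (1 / 16 * T) * Real.exp (1 / 16 * T) * Real.exp (-(T / 2))) := by gcongr
            _ = _ := by
                rw [← Real.exp_add, ← Real.exp_add, ← Real.exp_add]; congr 1; ring
  have hUm : MeasurableSet (⋃ i, ⋃ j, Bad i j) :=
    MeasurableSet.iUnion fun i => MeasurableSet.iUnion fun j => hBm i j
  calc ENNReal.ofReal (1 - Real.exp (-(1 / 16 * T))) =
        1 - ENNReal.ofReal (Real.exp (-(1 / 16 * T))) := by
        rw [ENNReal.ofReal_sub _ (Real.exp_pos _).le, ENNReal.ofReal_one]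
    _ ≤ 1 - μ (⋃ i, ⋃ j, Bad i j) := tsub_le_tsub_left hU _
    _ = μ (⋃ i, ⋃ j, Bad i j)ᶜ := (prob_compl_eq_one_sub hUm).symm
    _ ≤ _ := by
        apply measure_mono
        intro x hx i j hij
        refine pmat_bound (fun k => (x k : EuclideanSpace ℝ (Fin d))) (fun k => by simp) σ hσ t ht0
          (by linarith) ?_ i j hij
        intro k l hkl
        by_contra hc
        apply hx
        simp only [Set.mem_iUnion]
        exact ⟨k, l, hkl, not_le.1 hc⟩

end
end
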